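/- Define the rational functions of s ∈ ℂ: t(s) = (s+1)²(s+3)²(s²−2s+3)/(2(s²+3)³) and y(s) = (s+1)(s+3)(s²−2s+3)(s²+6s+3)/(2(s²+1)(s²+3)(s²+9)). Then for every s ∈ ℂ such that s²+3 ≠ 0, s²+1 ≠ 0, s²+9 ≠ 0, t'(s) ≠ 0, t(s) ∉ {0,1}, and y(s) ∉ {0, 1, t(s)}, the pair (t, y) is a parametric solution of the sixth Painlevé equation PVI(α,β,γ,δ) at s with θ-tuple (θ₀, θ₁, θ_t, θ_∞) = (2/3, 2/3, 1/3, 1/3), i.e. α = 2/9, β = −2/9, γ = 2/9, δ = 4/9. -/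

import Mathlib

noncomputable def tFun7 : ℂ → ℂ := fun s => (s+1)^2*(s+3)^2*(s^2-2*s+3)/(2*(s^2+3)^3)

noncomputable def yFun7 : ℂ → ℂ := fun s => (s+1)*(s+3)*(s^2-2*s+3)*(s^2+6*s+3)/(2*(s^2+1)*(s^2+3)*(s^2+9))

/-!
Both `t` and `y` are invariant under the involution `s ↦ 3 / s`, so they are rational functions of
`x = s + 3 / s`, namely `t = (x + 4)² (x - 2) / (2 x³)` and
`y = (x + 4) (x - 2) (x + 6) / (2 x (x² + 4))`. Being a parametric solution is invariant under
reparametrization, so it suffices to verify the equation in the variable `x`. There `t`, `t - 1`,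
`y`, `y - 1` and `y - t` are products of linear factors over powers of `x` and `x² + 4`, and the
sixth Painlevé equation becomes a polynomial identity of small degree.
-/

open Filter Topology

/-- The right-hand side of the sixth Painlevé equation with parameters `α, β, γ, δ`, as a rational
function of the independent variable `t`, the unknown `y` and its derivative `p = dy/dt`. -/
def painleveVIRHS {K : Type*} [Field K] (α β γ δ t y p : K) : K :=
  (1/2) * (1/y + 1/(y - 1) + 1/(y - t)) * p ^ 2
    - (1/t + 1/(t - 1) + 1/(y - t)) * p
    + (y * (y - 1) * (y - t) / (t ^ 2 * (t - 1) ^ 2)) *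
      (α + β * t / y ^ 2 + γ * (t - 1) / (y - 1) ^ 2 + δ * t * (t - 1) / (y - t) ^ 2)

/-- The curve `u ↦ (t u, y u)` is a parametric solution of the sixth Painlevé equation at `s`: the
functions are analytic there, `t` is a local coordinate, and the equation holds at `s` with `d/dt`
computed as `(deriv t)⁻¹ * d/du`. -/
structure IsPainleveVISolutionAt {𝕜 : Type*} [NontriviallyNormedField 𝕜]
    (α β γ δ : 𝕜) (t y : 𝕜 → 𝕜) (s : 𝕜) : Prop where
  analyticAt_t : AnalyticAt 𝕜 t s
  analyticAt_y : AnalyticAt 𝕜 y s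
  deriv_t_ne_zero : deriv t s ≠ 0
  equation : deriv (fun u => deriv y u / deriv t u) s / deriv t s =
    painleveVIRHS α β γ δ (t s) (y s) (deriv y s / deriv t s)

section Reparametrization

variable {𝕜 : Type*} [NontriviallyNormedField 𝕜] {f g t y φ : 𝕜 → 𝕜} {s : 𝕜}

theorem deriv_comp_div_deriv_comp (hf : DifferentiableAt 𝕜 f (φ s))
    (hg : DifferentiableAt 𝕜 g (φ s)) (hφ : DifferentiableAt 𝕜 φ s) (hφ' : deriv φ s ≠ 0) :
    deriv (f ∘ φ) s / deriv (g ∘ φ) s = deriv f (φ s) / deriv g (φ s) := by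
  rw [deriv_comp s hf hφ, deriv_comp s hg hφ, mul_div_mul_right _ _ hφ']

theorem eventually_deriv_comp_div_deriv_comp [CompleteSpace 𝕜] (hf : AnalyticAt 𝕜 f (φ s))
    (hg : AnalyticAt 𝕜 g (φ s)) (hφ : AnalyticAt 𝕜 φ s) (hφ' : deriv φ s ≠ 0) :
    (fun u => deriv (f ∘ φ) u / deriv (g ∘ φ) u) =ᶠ[𝓝 s]
      (fun x => deriv f x / deriv g x) ∘ φ := by
  filter_upwards [hφ.continuousAt.eventually hf.eventually_analyticAt,
    hφ.continuousAt.eventually hg.eventually_analyticAt, hφ.eventually_analyticAt,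
    hφ.deriv.continuousAt.eventually_ne hφ'] with u hfu hgu hφu hφu'
  exact deriv_comp_div_deriv_comp hfu.differentiableAt hgu.differentiableAt
    hφu.differentiableAt hφu'

namespace IsPainleveVISolutionAt

variable {α β γ δ : 𝕜}

theorem comp [CompleteSpace 𝕜] (h : IsPainleveVISolutionAt α β γ δ t y (φ s))
    (hφ : AnalyticAt 𝕜 φ s) (hφ' : deriv φ s ≠ 0) :
    IsPainleveVISolutionAt α β γ δ (t ∘ φ) (y ∘ φ) s where
  analyticAt_t := h.analyticAt_t.comp hφ
  analyticAt_y := h.analyticAt_y.comp hφ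
  deriv_t_ne_zero := by
    rw [deriv_comp s h.analyticAt_t.differentiableAt hφ.differentiableAt]
    exact mul_ne_zero h.deriv_t_ne_zero hφ'
  equation := by
    have slope_eq := eventually_deriv_comp_div_deriv_comp h.analyticAt_y h.analyticAt_t hφ hφ'
    have slope_differentiableAt : DifferentiableAt 𝕜 (fun x => deriv y x / deriv t x) (φ s) :=
      (h.analyticAt_y.deriv.div h.analyticAt_t.deriv h.deriv_t_ne_zero).differentiableAt
    rw [slope_eq.deriv_eq, slope_eq.eq_of_nhds,
      deriv_comp_div_deriv_comp slope_differentiableAt h.analyticAt_t.differentiableAt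
        hφ.differentiableAt hφ']
    exact h.equation

theorem congr {t₁ y₁ : 𝕜 → 𝕜} (h : IsPainleveVISolutionAt α β γ δ t y s)
    (ht : t =ᶠ[𝓝 s] t₁) (hy : y =ᶠ[𝓝 s] y₁) : IsPainleveVISolutionAt α β γ δ t₁ y₁ s where
  analyticAt_t := h.analyticAt_t.congr ht
  analyticAt_y := h.analyticAt_y.congr hy
  deriv_t_ne_zero := ht.deriv_eq ▸ h.deriv_t_ne_zero
  equation := by
    have slope_eq : (fun u => deriv y u / deriv t u) =ᶠ[𝓝 s] fun u => deriv y₁ u / deriv t₁ u :=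
      hy.deriv.div ht.deriv
    rw [← slope_eq.deriv_eq, ← slope_eq.eq_of_nhds, ← ht.deriv_eq, ← ht.eq_of_nhds,
      ← hy.eq_of_nhds]
    exact h.equation

end IsPainleveVISolutionAt

end Reparametrization

/-- The function `t` of the theorem in the coordinate `x = s + 3 / s`. -/
noncomputable def reducedT (x : ℂ) : ℂ := (x + 4) ^ 2 * (x - 2) / (2 * x ^ 3)

/-- The function `y` of the theorem in the coordinate `x = s + 3 / s`. -/
noncomputable def reducedY (x : ℂ) : ℂ := (x + 4) * (x - 2) * (x + 6) / (2 * x * (x ^ 2 + 4))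

/-- The derivative `dy/dt` of the reduced solution, as a function of `x`. -/
noncomputable def reducedSlope (x : ℂ) : ℂ :=
  4 * x ^ 2 * (x ^ 4 - 22 * x ^ 2 - 24) / (3 * (x ^ 2 - 16) * (x ^ 2 + 4) ^ 2)

section ReducedSolution

variable {x : ℂ}

theorem reducedT_sub_one (hx : x ≠ 0) :
    reducedT x - 1 = -((x - 4) ^ 2 * (x + 2)) / (2 * x ^ 3) := by
  unfold reducedT
  field_simp
  ring

theorem reducedY_sub_one (hx : x ≠ 0) (hx4 : x ^ 2 + 4 ≠ 0) :
    reducedY x - 1 = -((x - 4) * (x + 2) * (x - 6)) / (2 * x * (x ^ 2 + 4)) := by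
  unfold reducedY
  field_simp
  ring

theorem reducedY_sub_reducedT (hx : x ≠ 0) (hx4 : x ^ 2 + 4 ≠ 0) :
    reducedY x - reducedT x =
      (x + 4) * (x - 2) * (x - 4) * (x + 2) / (x ^ 3 * (x ^ 2 + 4)) := by
  unfold reducedY reducedT
  field_simp
  ring

theorem analyticAt_reducedT (hx : x ≠ 0) : AnalyticAt ℂ reducedT x := by
  unfold reducedT
  fun_prop (disch := simpa using hx)

theorem analyticAt_reducedY (hx : x ≠ 0) (hx4 : x ^ 2 + 4 ≠ 0) : AnalyticAt ℂ reducedY x := by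
  unfold reducedY
  fun_prop (disch := simp [hx, hx4])

theorem hasDerivAt_reducedT (hx : x ≠ 0) :
    HasDerivAt reducedT (-3 * (x ^ 2 - 16) / x ^ 4) x := by
  have numerator : HasDerivAt (fun u : ℂ => (u + 4) ^ 2 * (u - 2))
      (2 * (x + 4) * (x - 2) + (x + 4) ^ 2) x := by
    simpa using (((hasDerivAt_id x).add_const 4).fun_pow 2).fun_mul ((hasDerivAt_id x).sub_const 2)
  have denominator : HasDerivAt (fun u : ℂ => 2 * u ^ 3) (2 * (3 * x ^ 2)) x := by
    simpa using (hasDerivAt_pow 3 x).const_mul 2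
  refine (numerator.fun_div denominator (by simpa using hx)).congr_deriv ?_
  field_simp
  ring

theorem hasDerivAt_reducedY (hx : x ≠ 0) (hx4 : x ^ 2 + 4 ≠ 0) :
    HasDerivAt reducedY (-4 * (x ^ 4 - 22 * x ^ 2 - 24) / (x ^ 2 * (x ^ 2 + 4) ^ 2)) x := by
  have numerator : HasDerivAt (fun u : ℂ => (u + 4) * (u - 2) * (u + 6))
      ((x - 2 + (x + 4)) * (x + 6) + (x + 4) * (x - 2)) x := by
    simpa using (((hasDerivAt_id x).add_const 4).fun_mul ((hasDerivAt_id x).sub_const 2)).fun_mul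
      ((hasDerivAt_id x).add_const 6)
  have denominator : HasDerivAt (fun u : ℂ => 2 * u * (u ^ 2 + 4))
      (2 * (x ^ 2 + 4) + 2 * x * (2 * x)) x := by
    simpa using ((hasDerivAt_id x).const_mul 2).fun_mul ((hasDerivAt_pow 2 x).add_const 4)
  refine (numerator.fun_div denominator (by simp [hx, hx4])).congr_deriv ?_
  field_simp
  ring

theorem hasDerivAt_reducedSlope (hx16 : x ^ 2 - 16 ≠ 0) (hx4 : x ^ 2 + 4 ≠ 0) :
    HasDerivAt reducedSlope
      (16 * x * (7 * x ^ 6 - 116 * x ^ 4 + 1216 * x ^ 2 + 768) /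
        (3 * (x ^ 2 - 16) ^ 2 * (x ^ 2 + 4) ^ 3)) x := by
  have numerator : HasDerivAt (fun u : ℂ => 4 * u ^ 2 * (u ^ 4 - 22 * u ^ 2 - 24))
      (4 * (2 * x) * (x ^ 4 - 22 * x ^ 2 - 24) + 4 * x ^ 2 * (4 * x ^ 3 - 22 * (2 * x))) x := by
    simpa using ((hasDerivAt_pow 2 x).const_mul 4).fun_mul
      (((hasDerivAt_pow 4 x).fun_sub ((hasDerivAt_pow 2 x).const_mul 22)).sub_const 24)
  have denominator : HasDerivAt (fun u : ℂ => 3 * (u ^ 2 - 16) * (u ^ 2 + 4) ^ 2)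
      (3 * (2 * x) * (x ^ 2 + 4) ^ 2 + 3 * (x ^ 2 - 16) * (2 * (x ^ 2 + 4) * (2 * x))) x := by
    simpa using (((hasDerivAt_pow 2 x).sub_const 16).const_mul 3).fun_mul
      (((hasDerivAt_pow 2 x).add_const 4).fun_pow 2)
  refine (numerator.fun_div denominator (by simp [hx16, hx4])).congr_deriv ?_
  field_simp
  ring

theorem sq_sub_sixteen_ne_zero_of_reducedY_ne (hx : x ≠ 0) (hx4 : x ^ 2 + 4 ≠ 0)
    (hy0 : reducedY x ≠ 0) (hy1 : reducedY x ≠ 1) : x ^ 2 - 16 ≠ 0 := by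
  rw [← sub_ne_zero, reducedY_sub_one hx hx4] at hy1
  rw [show x ^ 2 - 16 = (x - 4) * (x + 4) by ring]
  refine mul_ne_zero (fun h => hy1 ?_) (fun h => hy0 ?_)
  · simp [h]
  · simp [reducedY, h]

theorem deriv_reducedY_div_deriv_reducedT (hx : x ≠ 0) (hx4 : x ^ 2 + 4 ≠ 0)
    (hx16 : x ^ 2 - 16 ≠ 0) : deriv reducedY x / deriv reducedT x = reducedSlope x := by
  rw [(hasDerivAt_reducedY hx hx4).deriv, (hasDerivAt_reducedT hx).deriv, reducedSlope]
  field_simp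

theorem deriv_deriv_reducedY_div_deriv_reducedT (hx : x ≠ 0) (hx4 : x ^ 2 + 4 ≠ 0)
    (hx16 : x ^ 2 - 16 ≠ 0) :
    deriv (fun u => deriv reducedY u / deriv reducedT u) x = deriv reducedSlope x := by
  refine EventuallyEq.deriv_eq ?_
  filter_upwards [eventually_ne_nhds hx,
    (by fun_prop : ContinuousAt (fun u : ℂ => u ^ 2 + 4) x).eventually_ne hx4,
    (by fun_prop : ContinuousAt (fun u : ℂ => u ^ 2 - 16) x).eventually_ne hx16] with u hu hu4 hu16
  exact deriv_reducedY_div_deriv_reducedT hu hu4 hu16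

theorem deriv_reducedSlope_div_deriv_reducedT (hx : x ≠ 0) (hx4 : x ^ 2 + 4 ≠ 0)
    (hy0 : reducedY x ≠ 0) (hy1 : reducedY x ≠ 1) :
    deriv reducedSlope x / deriv reducedT x =
      painleveVIRHS (2/9) (-2/9) (2/9) (4/9) (reducedT x) (reducedY x) (reducedSlope x) := by
  have hx16 := sq_sub_sixteen_ne_zero_of_reducedY_ne hx hx4 hy0 hy1
  rw [← sub_ne_zero, reducedY_sub_one hx hx4] at hy1
  rw [(hasDerivAt_reducedSlope hx16 hx4).deriv, (hasDerivAt_reducedT hx).deriv, painleveVIRHS,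
    reducedY_sub_reducedT hx hx4, reducedY_sub_one hx hx4, reducedT_sub_one hx]
  simp only [reducedY, reducedT, reducedSlope] at hy0 ⊢
  simp only [ne_eq, div_eq_zero_iff, neg_eq_zero, mul_eq_zero, not_or] at hy0 hy1
  obtain ⟨⟨⟨x_add_four_ne, x_sub_two_ne⟩, x_add_six_ne⟩, -⟩ := hy0
  obtain ⟨⟨⟨x_sub_four_ne, x_add_two_ne⟩, x_sub_six_ne⟩, -⟩ := hy1
  rw [show x ^ 2 - 16 = (x - 4) * (x + 4) by ring]
  field_simp
  ring

theorem isPainleveVISolutionAt_reduced (hx : x ≠ 0) (hx4 : x ^ 2 + 4 ≠ 0)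
    (hy0 : reducedY x ≠ 0) (hy1 : reducedY x ≠ 1) :
    IsPainleveVISolutionAt (2/9) (-2/9) (2/9) (4/9) reducedT reducedY x where
  analyticAt_t := analyticAt_reducedT hx
  analyticAt_y := analyticAt_reducedY hx hx4
  deriv_t_ne_zero := by
    have hx16 := sq_sub_sixteen_ne_zero_of_reducedY_ne hx hx4 hy0 hy1
    rw [(hasDerivAt_reducedT hx).deriv]
    simp [hx, hx16]
  equation := by
    have hx16 := sq_sub_sixteen_ne_zero_of_reducedY_ne hx hx4 hy0 hy1
    rw [deriv_deriv_reducedY_div_deriv_reducedT hx hx4 hx16,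
      deriv_reducedY_div_deriv_reducedT hx hx4 hx16]
    exact deriv_reducedSlope_div_deriv_reducedT hx hx4 hy0 hy1

end ReducedSolution

/-- The coordinate on the quotient of the `s`-line by the involution `s ↦ 3 / s`. -/
noncomputable def involutionInvariant (s : ℂ) : ℂ := s + 3 / s

section InvolutionInvariant

variable {s : ℂ}

theorem analyticAt_involutionInvariant (hs : s ≠ 0) : AnalyticAt ℂ involutionInvariant s := by
  unfold involutionInvariant
  fun_prop (disch := exact hs)

theorem mul_involutionInvariant (hs : s ≠ 0) : s * involutionInvariant s = s ^ 2 + 3 := by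
  unfold involutionInvariant
  field_simp

theorem sq_mul_involutionInvariant_sq_add_four (hs : s ≠ 0) :
    s ^ 2 * (involutionInvariant s ^ 2 + 4) = (s ^ 2 + 1) * (s ^ 2 + 9) := by
  linear_combination (s * involutionInvariant s + s ^ 2 + 3) * mul_involutionInvariant hs

theorem mul_involutionInvariant_add_four (hs : s ≠ 0) :
    s * (involutionInvariant s + 4) = (s + 1) * (s + 3) := by
  linear_combination mul_involutionInvariant hs

theorem mul_involutionInvariant_sub_two (hs : s ≠ 0) :
    s * (involutionInvariant s - 2) = s ^ 2 - 2 * s + 3 := by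
  linear_combination mul_involutionInvariant hs

theorem mul_involutionInvariant_add_six (hs : s ≠ 0) :
    s * (involutionInvariant s + 6) = s ^ 2 + 6 * s + 3 := by
  linear_combination mul_involutionInvariant hs

theorem tFun7_eq_reducedT (hs : s ≠ 0) : tFun7 s = reducedT (involutionInvariant s) := by
  rw [tFun7, reducedT, ← mul_pow, ← mul_involutionInvariant_add_four hs,
    ← mul_involutionInvariant_sub_two hs, ← mul_involutionInvariant hs]
  field_simp

theorem yFun7_eq_reducedY (hs : s ≠ 0) : yFun7 s = reducedY (involutionInvariant s) := by
  rw [yFun7, reducedY, mul_right_comm _ (s ^ 2 + 3), mul_assoc 2 (s ^ 2 + 1),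
    ← sq_mul_involutionInvariant_sq_add_four hs, ← mul_involutionInvariant_add_four hs,
    ← mul_involutionInvariant_sub_two hs, ← mul_involutionInvariant_add_six hs,
    ← mul_involutionInvariant hs]
  field_simp

end InvolutionInvariant

/-- Parametric algebraic solution of the sixth Painlevé equation. -/
theorem stmt_7 (s : ℂ)
    (h1 : s^2+3 ≠ 0)
    (h2 : s^2+1 ≠ 0)
    (h3 : s^2+9 ≠ 0)
    (hdt : deriv tFun7 s ≠ 0)
    (ht0 : tFun7 s ≠ 0) (ht1 : tFun7 s ≠ 1)
    (hy0 : yFun7 s ≠ 0) (hy1 : yFun7 s ≠ 1) (hyt : yFun7 s ≠ tFun7 s) :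
    deriv (fun u => deriv yFun7 u / deriv tFun7 u) s / deriv tFun7 s =
      (1/2) * (1/(yFun7 s) + 1/(yFun7 s - 1) + 1/(yFun7 s - tFun7 s)) *
          (deriv yFun7 s / deriv tFun7 s)^2
        - (1/(tFun7 s) + 1/(tFun7 s - 1) + 1/(yFun7 s - tFun7 s)) *
          (deriv yFun7 s / deriv tFun7 s)
        + (yFun7 s * (yFun7 s - 1) * (yFun7 s - tFun7 s) /
            ((tFun7 s)^2 * (tFun7 s - 1)^2)) *
          ((2/9 : ℂ) + (-2/9 : ℂ) * tFun7 s / (yFun7 s)^2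
            + (2/9 : ℂ) * (tFun7 s - 1) / (yFun7 s - 1)^2
            + (4/9 : ℂ) * tFun7 s * (tFun7 s - 1) / (yFun7 s - tFun7 s)^2) := by
  -- `involutionInvariant` has a pole at `s = 0`, but there `y = t = 1/2`.
  have hs : s ≠ 0 := by
    rintro rfl
    norm_num [yFun7, tFun7] at hyt
  have ht : tFun7 =ᶠ[𝓝 s] reducedT ∘ involutionInvariant :=
    (eventually_ne_nhds hs).mono fun _ => tFun7_eq_reducedT
  have hy : yFun7 =ᶠ[𝓝 s] reducedY ∘ involutionInvariant :=
    (eventually_ne_nhds hs).mono fun _ => yFun7_eq_reducedY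
  have hx : involutionInvariant s ≠ 0 :=
    right_ne_zero_of_mul (mul_involutionInvariant hs ▸ h1)
  have hx4 : involutionInvariant s ^ 2 + 4 ≠ 0 :=
    right_ne_zero_of_mul (sq_mul_involutionInvariant_sq_add_four hs ▸ mul_ne_zero h2 h3)
  have hφ := analyticAt_involutionInvariant hs
  have hφ' : deriv involutionInvariant s ≠ 0 := by
    rw [ht.deriv_eq,
      deriv_comp s (analyticAt_reducedT hx).differentiableAt hφ.differentiableAt] at hdt
    exact right_ne_zero_of_mul hdt
  rw [yFun7_eq_reducedY hs] at hy0 hy1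
  have reduced := isPainleveVISolutionAt_reduced hx hx4 hy0 hy1
  exact ((reduced.comp hφ hφ').congr ht.symm hy.symm).equation
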